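/- arXiv:1010.2947 — 2 statements merged into one kernel-verified Lean document; each statement's English description precedes it below -/
import Mathlib

section
/- Under the stated hypotheses, for all k, l ∈ ℝ, all m ∈ ℂ with Im m ≤ 0, and all t > 0, the function P(k,l,m,t) := k·û(k,l,m,t) + l·v̂(k,l,m,t) + m·ŵ(k,l,m,t) satisfies the ordinary differential equation ∂²ₜP + (λ+2μ)(k²+l²+m²)P = F_P(k,l,m,t), where F_P := −( μk·g̃₁ + μl·g̃₂ + iλ(k²+l²)·w̃ ) − m·( 2iμk·ũ + 2iμl·ṽ + (λ+2μ)·g̃₃ ) − i m²(λ+2μ)·w̃. -/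
open MeasureTheory Set

noncomputable section

/-- Partial derivative of a function of `(x, y, z, t)` in the `i`-th slot. -/
def pd : Fin 4 → (ℝ → ℝ → ℝ → ℝ → ℝ) → (ℝ → ℝ → ℝ → ℝ → ℝ)
  | ⟨0, _⟩, f => fun x y z t => deriv (fun x' => f x' y z t) x
  | ⟨1, _⟩, f => fun x y z t => deriv (fun y' => f x y' z t) y
  | ⟨2, _⟩, f => fun x y z t => deriv (fun z' => f x y z' t) z
  | ⟨3, _⟩, f => fun x y z t => deriv (fun t' => f x y z t') t

/-- Smoothness of a function of `(x, y, z, t)` jointly in its four arguments. -/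
def Smooth4 (f : ℝ → ℝ → ℝ → ℝ → ℝ) : Prop :=
  ContDiff ℝ (⊤ : ℕ∞) fun p : ℝ × ℝ × ℝ × ℝ => f p.1 p.2.1 p.2.2.1 p.2.2.2

/-- `f` decays faster than any power of `1 + |x| + |y| + z` on the half space `z ≥ 0`,
uniformly for `t` in compact time intervals. -/
def Decays (f : ℝ → ℝ → ℝ → ℝ → ℝ) : Prop :=
  ∀ T : ℝ, 0 < T → ∀ n : ℕ, ∃ C : ℝ, ∀ x y z t : ℝ,
    0 ≤ z → 0 ≤ t → t ≤ T → |f x y z t| ≤ C / (1 + |x| + |y| + z) ^ n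

/-- `f` and all its partial derivatives of order at most two decay. -/
def DecaysAll (f : ℝ → ℝ → ℝ → ℝ → ℝ) : Prop :=
  Decays f ∧ (∀ i : Fin 4, Decays (pd i f)) ∧ ∀ i j : Fin 4, Decays (pd i (pd j f))

/-- The three-dimensional Lamé–Navier equations on the half space `z > 0`, `t > 0`
(with unit density). -/
def LameNavier (lam mu : ℝ) (u v w : ℝ → ℝ → ℝ → ℝ → ℝ) : Prop :=
  ∀ x y z t : ℝ, 0 < z → 0 < t →
    ((lam + 2 * mu) * pd 0 (pd 0 u) x y z t
        + (lam + mu) * (pd 0 (pd 1 v) x y z t + pd 0 (pd 2 w) x y z t)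
        + mu * (pd 1 (pd 1 u) x y z t + pd 2 (pd 2 u) x y z t)
      = pd 3 (pd 3 u) x y z t) ∧
    ((lam + 2 * mu) * pd 1 (pd 1 v) x y z t
        + (lam + mu) * (pd 1 (pd 2 w) x y z t + pd 1 (pd 0 u) x y z t)
        + mu * (pd 2 (pd 2 v) x y z t + pd 0 (pd 0 v) x y z t)
      = pd 3 (pd 3 v) x y z t) ∧
    ((lam + 2 * mu) * pd 2 (pd 2 w) x y z t
        + (lam + mu) * (pd 2 (pd 0 u) x y z t + pd 2 (pd 1 v) x y z t)
        + mu * (pd 0 (pd 0 w) x y z t + pd 1 (pd 1 w) x y z t)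
      = pd 3 (pd 3 w) x y z t)

/-- Lamb's stress boundary conditions on the surface `z = 0`. -/
def StressBC (lam mu : ℝ) (u v w : ℝ → ℝ → ℝ → ℝ → ℝ) (g₁ g₂ g₃ : ℝ → ℝ → ℝ → ℝ) : Prop :=
  ∀ x y t : ℝ, 0 < t →
    pd 2 u x y 0 t + pd 0 w x y 0 t = g₁ x y t ∧
    pd 2 v x y 0 t + pd 1 w x y 0 t = g₂ x y t ∧
    pd 2 w x y 0 t + lam / (lam + 2 * mu) * (pd 0 u x y 0 t + pd 1 v x y 0 t) = g₃ x y t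

/-- The half-space Fourier transform `∫∫∫ e^{−ikx−ily−imz} f dz dy dx`, defined for
`k, l ∈ ℝ` and `m` in the closed lower half plane. -/
def FT3 (f : ℝ → ℝ → ℝ → ℝ → ℝ) (k l : ℝ) (m : ℂ) (t : ℝ) : ℂ :=
  ∫ x : ℝ, ∫ y : ℝ, ∫ z in Ici (0 : ℝ),
    Complex.exp (-Complex.I * ((k : ℂ) * x + (l : ℂ) * y) - Complex.I * m * z) * (f x y z t : ℂ)

/-- The boundary Fourier transform `∫∫ e^{−ikx−ily} f(x, y, t) dy dx`. -/
def FT2 (f : ℝ → ℝ → ℝ → ℝ) (k l : ℝ) (t : ℝ) : ℂ :=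
  ∫ x : ℝ, ∫ y : ℝ,
    Complex.exp (-Complex.I * ((k : ℂ) * x + (l : ℂ) * y)) * (f x y t : ℂ)

/-- The forcing `F_P` of the ODE for `P = kû + lv̂ + mŵ`, built from the transforms of the
boundary data `g₁, g₂, g₃` and the boundary values of `u, v, w`. -/
def FP (lam mu : ℝ) (u v w : ℝ → ℝ → ℝ → ℝ → ℝ) (g₁ g₂ g₃ : ℝ → ℝ → ℝ → ℝ)
    (k l : ℝ) (m : ℂ) (t : ℝ) : ℂ :=
  -((mu : ℂ) * (k : ℂ) * FT2 g₁ k l t + (mu : ℂ) * (l : ℂ) * FT2 g₂ k l t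
      + Complex.I * (lam : ℂ) * ((k : ℂ) ^ 2 + (l : ℂ) ^ 2) *
        FT2 (fun x y τ => w x y 0 τ) k l t)
    - m * (2 * Complex.I * (mu : ℂ) * (k : ℂ) * FT2 (fun x y τ => u x y 0 τ) k l t
        + 2 * Complex.I * (mu : ℂ) * (l : ℂ) * FT2 (fun x y τ => v x y 0 τ) k l t
        + ((lam : ℂ) + 2 * (mu : ℂ)) * FT2 g₃ k l t)
    - Complex.I * m ^ 2 * ((lam : ℂ) + 2 * (mu : ℂ)) * FT2 (fun x y τ => w x y 0 τ) k l t

/-- The forcing `F_Q` of the ODE for `Q = mv̂ − lŵ`. -/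
def FQ (lam mu : ℝ) (u v w : ℝ → ℝ → ℝ → ℝ → ℝ) (g₁ g₂ g₃ : ℝ → ℝ → ℝ → ℝ)
    (k l : ℝ) (m : ℂ) (t : ℝ) : ℂ :=
  (((lam : ℂ) + 2 * (mu : ℂ)) * (l : ℂ) * FT2 g₃ k l t
      + Complex.I * (mu : ℂ) * (k : ℂ) * (l : ℂ) * FT2 (fun x y τ => u x y 0 τ) k l t
      + Complex.I * (mu : ℂ) * (l : ℂ) ^ 2 * FT2 (fun x y τ => v x y 0 τ) k l t)
    + m * (-((mu : ℂ)) * FT2 g₂ k l t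
        + 2 * Complex.I * (mu : ℂ) * (l : ℂ) * FT2 (fun x y τ => w x y 0 τ) k l t)
    - Complex.I * (mu : ℂ) * m ^ 2 * FT2 (fun x y τ => v x y 0 τ) k l t

/-- The forcing `F_R` of the ODE for `R = kŵ − mû`. -/
def FR (lam mu : ℝ) (u v w : ℝ → ℝ → ℝ → ℝ → ℝ) (g₁ g₂ g₃ : ℝ → ℝ → ℝ → ℝ)
    (k l : ℝ) (m : ℂ) (t : ℝ) : ℂ :=
  -(((lam : ℂ) + 2 * (mu : ℂ)) * (k : ℂ) * FT2 g₃ k l t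
      + Complex.I * (mu : ℂ) * (k : ℂ) ^ 2 * FT2 (fun x y τ => u x y 0 τ) k l t
      + Complex.I * (mu : ℂ) * (k : ℂ) * (l : ℂ) * FT2 (fun x y τ => v x y 0 τ) k l t)
    + m * ((mu : ℂ) * FT2 g₁ k l t
        - 2 * Complex.I * (mu : ℂ) * (k : ℂ) * FT2 (fun x y τ => w x y 0 τ) k l t)
    + Complex.I * (mu : ℂ) * m ^ 2 * FT2 (fun x y τ => u x y 0 τ) k l t

/-- The kernel of the transform. -/
def KK (k l : ℝ) (m : ℂ) (x y z : ℝ) : ℂ :=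
  Complex.exp (-Complex.I * ((k : ℂ) * x + (l : ℂ) * y) - Complex.I * m * z)

/-- Transform with respect to a general measure in the `z` variable. -/
def IT (ν : Measure ℝ) (f : ℝ → ℝ → ℝ → ℝ → ℝ) (k l : ℝ) (m : ℂ) (t : ℝ) : ℂ :=
  ∫ p : ℝ × ℝ × ℝ, KK k l m p.1 p.2.1 p.2.2 * (f p.1 p.2.1 p.2.2 t : ℂ)
    ∂((volume : Measure ℝ).prod ((volume : Measure ℝ).prod ν))

/-- Admissible measures in `z`. -/
structure Adm (ν : Measure ℝ) : Prop where
  sf : SFinite ν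
  nn : ∀ᵐ z ∂ν, 0 ≤ z
  int : Integrable (fun z : ℝ => (1 + z ^ 2)⁻¹) ν

/-- Smooth and decaying. -/
def Good (f : ℝ → ℝ → ℝ → ℝ → ℝ) : Prop := Smooth4 f ∧ Decays f

lemma adm_Ioi : Adm ((volume : Measure ℝ).restrict (Ioi 0)) :=
  ⟨inferInstance, by
    filter_upwards [ae_restrict_mem measurableSet_Ioi] with z hz using le_of_lt hz,
    integrable_inv_one_add_sq.restrict⟩

lemma adm_dirac : Adm (Measure.dirac (0 : ℝ)) :=
  ⟨inferInstance, by rw [ae_dirac_eq]; exact le_refl (0 : ℝ), by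
    apply integrable_dirac; simp⟩

lemma pd_smooth_aux (f : ℝ → ℝ → ℝ → ℝ → ℝ) (hf : Smooth4 f) (e : ℝ × ℝ × ℝ × ℝ) :
    ContDiff ℝ (⊤ : ℕ∞) fun p : ℝ × ℝ × ℝ × ℝ =>
      fderiv ℝ (fun p : ℝ × ℝ × ℝ × ℝ => f p.1 p.2.1 p.2.2.1 p.2.2.2) p e := by
  have h := ContDiff.fderiv_right (m := (⊤ : ℕ∞)) hf (by simp)
  exact h.clm_apply contDiff_const

lemma hd_aux (f : ℝ → ℝ → ℝ → ℝ → ℝ) (hf : Smooth4 f) (c : ℝ → ℝ × ℝ × ℝ × ℝ)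
    (e : ℝ × ℝ × ℝ × ℝ) (s : ℝ) (hc : HasDerivAt c e s) :
    HasDerivAt (fun s => f (c s).1 (c s).2.1 (c s).2.2.1 (c s).2.2.2)
      (fderiv ℝ (fun p : ℝ × ℝ × ℝ × ℝ => f p.1 p.2.1 p.2.2.1 p.2.2.2) (c s) e) s := by
  have h := (hf.differentiable (by simp)) (c s)
  exact h.hasFDerivAt.comp_hasDerivAt s hc

lemma hd0' (f : ℝ → ℝ → ℝ → ℝ → ℝ) (hf : Smooth4 f) (x y z t : ℝ) :
    HasDerivAt (fun s => f s y z t)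
      (fderiv ℝ (fun p : ℝ × ℝ × ℝ × ℝ => f p.1 p.2.1 p.2.2.1 p.2.2.2) (x, y, z, t) (1, 0, 0, 0)) x :=
  hd_aux f hf (fun s => (s, y, z, t)) (1, 0, 0, 0) x
    ((hasDerivAt_id x).prodMk (hasDerivAt_const x (y, z, t)))
lemma hd1' (f : ℝ → ℝ → ℝ → ℝ → ℝ) (hf : Smooth4 f) (x y z t : ℝ) :
    HasDerivAt (fun s => f x s z t)
      (fderiv ℝ (fun p : ℝ × ℝ × ℝ × ℝ => f p.1 p.2.1 p.2.2.1 p.2.2.2) (x, y, z, t) (0, 1, 0, 0)) y :=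
  hd_aux f hf (fun s => (x, s, z, t)) (0, 1, 0, 0) y
    ((hasDerivAt_const y x).prodMk ((hasDerivAt_id y).prodMk (hasDerivAt_const y (z, t))))
lemma hd2' (f : ℝ → ℝ → ℝ → ℝ → ℝ) (hf : Smooth4 f) (x y z t : ℝ) :
    HasDerivAt (fun s => f x y s t)
      (fderiv ℝ (fun p : ℝ × ℝ × ℝ × ℝ => f p.1 p.2.1 p.2.2.1 p.2.2.2) (x, y, z, t) (0, 0, 1, 0)) z :=
  hd_aux f hf (fun s => (x, y, s, t)) (0, 0, 1, 0) z
    ((hasDerivAt_const z x).prodMk ((hasDerivAt_const z y).prodMk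
      ((hasDerivAt_id z).prodMk (hasDerivAt_const z t))))
lemma hd3' (f : ℝ → ℝ → ℝ → ℝ → ℝ) (hf : Smooth4 f) (x y z t : ℝ) :
    HasDerivAt (fun s => f x y z s)
      (fderiv ℝ (fun p : ℝ × ℝ × ℝ × ℝ => f p.1 p.2.1 p.2.2.1 p.2.2.2) (x, y, z, t) (0, 0, 0, 1)) t :=
  hd_aux f hf (fun s => (x, y, z, s)) (0, 0, 0, 1) t
    ((hasDerivAt_const t x).prodMk ((hasDerivAt_const t y).prodMk
      ((hasDerivAt_const t z).prodMk (hasDerivAt_id t))))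

lemma hd0 (f : ℝ → ℝ → ℝ → ℝ → ℝ) (hf : Smooth4 f) (x y z t : ℝ) :
    HasDerivAt (fun s => f s y z t) (pd 0 f x y z t) x :=
  (hd0' f hf x y z t).differentiableAt.hasDerivAt
lemma hd1 (f : ℝ → ℝ → ℝ → ℝ → ℝ) (hf : Smooth4 f) (x y z t : ℝ) :
    HasDerivAt (fun s => f x s z t) (pd 1 f x y z t) y :=
  (hd1' f hf x y z t).differentiableAt.hasDerivAt
lemma hd2 (f : ℝ → ℝ → ℝ → ℝ → ℝ) (hf : Smooth4 f) (x y z t : ℝ) :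
    HasDerivAt (fun s => f x y s t) (pd 2 f x y z t) z :=
  (hd2' f hf x y z t).differentiableAt.hasDerivAt
lemma hd3 (f : ℝ → ℝ → ℝ → ℝ → ℝ) (hf : Smooth4 f) (x y z t : ℝ) :
    HasDerivAt (fun s => f x y z s) (pd 3 f x y z t) t :=
  (hd3' f hf x y z t).differentiableAt.hasDerivAt

lemma pd_smooth (f : ℝ → ℝ → ℝ → ℝ → ℝ) (hf : Smooth4 f) (i : Fin 4) : Smooth4 (pd i f) := by
  fin_cases i
  · have h := pd_smooth_aux f hf (1, 0, 0, 0)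
    refine (congrArg (ContDiff ℝ (⊤ : ℕ∞)) (funext fun p => ?_)).mpr h
    exact (hd0' f hf p.1 p.2.1 p.2.2.1 p.2.2.2).deriv
  · have h := pd_smooth_aux f hf (0, 1, 0, 0)
    refine (congrArg (ContDiff ℝ (⊤ : ℕ∞)) (funext fun p => ?_)).mpr h
    exact (hd1' f hf p.1 p.2.1 p.2.2.1 p.2.2.2).deriv
  · have h := pd_smooth_aux f hf (0, 0, 1, 0)
    refine (congrArg (ContDiff ℝ (⊤ : ℕ∞)) (funext fun p => ?_)).mpr h
    exact (hd2' f hf p.1 p.2.1 p.2.2.1 p.2.2.2).deriv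
  · have h := pd_smooth_aux f hf (0, 0, 0, 1)
    refine (congrArg (ContDiff ℝ (⊤ : ℕ∞)) (funext fun p => ?_)).mpr h
    exact (hd3' f hf p.1 p.2.1 p.2.2.1 p.2.2.2).deriv

lemma KK_norm (k l : ℝ) (m : ℂ) (hm : m.im ≤ 0) (x y z : ℝ) (hz : 0 ≤ z) :
    ‖KK k l m x y z‖ ≤ 1 := by
  rw [KK, Complex.norm_exp, Real.exp_le_one_iff]
  simp
  nlinarith

lemma KK_cont (k l : ℝ) (m : ℂ) :
    Continuous fun p : ℝ × ℝ × ℝ => KK k l m p.1 p.2.1 p.2.2 := by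
  unfold KK; fun_prop

lemma decay_bound (f : ℝ → ℝ → ℝ → ℝ → ℝ) (hf : Decays f) (T : ℝ) (hT : 0 < T) :
    ∃ C : ℝ, ∀ x y z t : ℝ, 0 ≤ z → 0 ≤ t → t ≤ T →
      |f x y z t| ≤ C * ((1 + x ^ 2)⁻¹ * ((1 + y ^ 2)⁻¹ * (1 + z ^ 2)⁻¹)) := by
  obtain ⟨C, hC⟩ := hf T hT 6
  have hC0 : 0 ≤ C := by
    have := hC 0 0 0 0 le_rfl le_rfl hT.le
    simp at this
    exact (abs_nonneg _).trans this
  refine ⟨C, fun x y z t hz ht htT => (hC x y z t hz ht htT).trans ?_⟩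
  rw [div_eq_mul_inv, ← mul_inv, ← mul_inv]
  refine mul_le_mul_of_nonneg_left ?_ hC0
  have hx := abs_nonneg x
  have hy := abs_nonneg y
  set S := 1 + |x| + |y| + z with hS
  refine inv_anti₀ (by positivity) ?_
  have h1 : 1 + x ^ 2 ≤ S ^ 2 := by rw [← sq_abs x]; nlinarith [mul_nonneg hx hy, mul_nonneg hx hz, mul_nonneg hy hz]
  have h2 : 1 + y ^ 2 ≤ S ^ 2 := by rw [← sq_abs y]; nlinarith [mul_nonneg hx hy, mul_nonneg hx hz, mul_nonneg hy hz]
  have h3 : 1 + z ^ 2 ≤ S ^ 2 := by nlinarith [mul_nonneg hx hy, mul_nonneg hx hz, mul_nonneg hy hz]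
  calc (1 + x ^ 2) * ((1 + y ^ 2) * (1 + z ^ 2)) ≤ S ^ 2 * (S ^ 2 * S ^ 2) := by gcongr
    _ = S ^ 6 := by ring

lemma bound_int (ν : Measure ℝ) (hν : Adm ν) :
    Integrable (fun p : ℝ × ℝ × ℝ => (1 + p.1 ^ 2)⁻¹ * ((1 + p.2.1 ^ 2)⁻¹ * (1 + p.2.2 ^ 2)⁻¹))
      ((volume : Measure ℝ).prod ((volume : Measure ℝ).prod ν)) := by
  have := hν.sf
  exact integrable_inv_one_add_sq.mul_prod (integrable_inv_one_add_sq.mul_prod hν.int)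

lemma ae_nn (ν : Measure ℝ) (hν : Adm ν) :
    ∀ᵐ p ∂((volume : Measure ℝ).prod ((volume : Measure ℝ).prod ν)), 0 ≤ p.2.2 := by
  have := hν.sf
  have h2 := (Measure.quasiMeasurePreserving_snd (μ := (volume : Measure ℝ)) (ν := ν)).ae hν.nn
  exact (Measure.quasiMeasurePreserving_snd (μ := (volume : Measure ℝ))
    (ν := (volume : Measure ℝ).prod ν)).ae h2

lemma int_cont (f : ℝ → ℝ → ℝ → ℝ → ℝ) (hf : Smooth4 f) (k l : ℝ) (m : ℂ) (t : ℝ) :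
    Continuous fun p : ℝ × ℝ × ℝ => KK k l m p.1 p.2.1 p.2.2 * (f p.1 p.2.1 p.2.2 t : ℂ) := by
  refine (KK_cont k l m).mul (Complex.continuous_ofReal.comp ?_)
  exact hf.continuous.comp (f := fun p : ℝ × ℝ × ℝ => (p.1, p.2.1, p.2.2, t)) (by fun_prop)

lemma norm_le (f : ℝ → ℝ → ℝ → ℝ → ℝ) (k l : ℝ) (m : ℂ) (hm : m.im ≤ 0) (x y z t : ℝ)
    (hz : 0 ≤ z) : ‖KK k l m x y z * (f x y z t : ℂ)‖ ≤ |f x y z t| := by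
  rw [norm_mul, Complex.norm_real, Real.norm_eq_abs]
  exact mul_le_of_le_one_left (abs_nonneg _) (KK_norm k l m hm x y z hz)

lemma int3 (ν : Measure ℝ) (hν : Adm ν) (f : ℝ → ℝ → ℝ → ℝ → ℝ) (hf : Good f)
    (k l : ℝ) (m : ℂ) (hm : m.im ≤ 0) (t : ℝ) (ht : 0 ≤ t) :
    Integrable (fun p : ℝ × ℝ × ℝ => KK k l m p.1 p.2.1 p.2.2 * (f p.1 p.2.1 p.2.2 t : ℂ))
      ((volume : Measure ℝ).prod ((volume : Measure ℝ).prod ν)) := by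
  obtain ⟨C, hC⟩ := decay_bound f hf.2 (t + 1) (by linarith)
  refine ((bound_int ν hν).const_mul C).mono' (int_cont f hf.1 k l m t).aestronglyMeasurable ?_
  filter_upwards [ae_nn ν hν] with p hp
  exact (norm_le f k l m hm _ _ _ t hp).trans (hC _ _ _ t hp ht (by linarith))

lemma IT_iter (ν : Measure ℝ) (hν : Adm ν) (f : ℝ → ℝ → ℝ → ℝ → ℝ) (hf : Good f)
    (k l : ℝ) (m : ℂ) (hm : m.im ≤ 0) (t : ℝ) (ht : 0 ≤ t) :
    IT ν f k l m t = ∫ x : ℝ, ∫ y : ℝ, ∫ z, KK k l m x y z * (f x y z t : ℂ) ∂ν := by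
  have := hν.sf
  have h := int3 ν hν f hf k l m hm t ht
  rw [IT, integral_prod _ h]
  refine integral_congr_ae ?_
  filter_upwards [h.prod_right_ae] with x hx
  rw [integral_prod _ hx]

lemma FT3_eq (f : ℝ → ℝ → ℝ → ℝ → ℝ) (hf : Good f)
    (k l : ℝ) (m : ℂ) (hm : m.im ≤ 0) (t : ℝ) (ht : 0 ≤ t) :
    FT3 f k l m t = IT (volume.restrict (Ioi 0)) f k l m t := by
  rw [IT_iter _ adm_Ioi f hf k l m hm t ht, FT3]
  simp_rw [integral_Ici_eq_integral_Ioi]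
  rfl

lemma FT2_eq (f : ℝ → ℝ → ℝ → ℝ → ℝ) (hf : Good f)
    (k l : ℝ) (m : ℂ) (hm : m.im ≤ 0) (t : ℝ) (ht : 0 ≤ t) :
    FT2 (fun x y τ => f x y 0 τ) k l t = IT (Measure.dirac 0) f k l m t := by
  rw [IT_iter _ adm_dirac f hf k l m hm t ht, FT2]
  simp [KK]

lemma ibp_gen {β : Type*} [MeasurableSpace β] (ν : Measure β) [SFinite ν] (H H' : ℝ × β → ℂ)
    (h : ∀ x b, HasDerivAt (fun x => H (x, b)) (H' (x, b)) x)
    (hH : Integrable H ((volume : Measure ℝ).prod ν))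
    (hH' : Integrable H' ((volume : Measure ℝ).prod ν)) :
    ∫ p, H' p ∂((volume : Measure ℝ).prod ν) = 0 := by
  rw [integral_prod_symm _ hH']
  refine integral_eq_zero_of_ae ?_
  filter_upwards [hH.prod_left_ae, hH'.prod_left_ae] with b hb hb'
  exact integral_eq_zero_of_hasDerivAt_of_integrable (fun x => h x b) hb' hb

lemma KK_d0 (k l : ℝ) (m : ℂ) (x y z : ℝ) :
    HasDerivAt (fun x => KK k l m x y z) (-(Complex.I * k) * KK k l m x y z) x := by
  have h : HasDerivAt (fun x : ℝ => -Complex.I * ((k : ℂ) * x + (l : ℂ) * y) - Complex.I * m * z)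
      (-Complex.I * (k * 1)) x :=
    ((((hasDerivAt_id x).ofReal_comp.const_mul (k : ℂ)).add_const _).const_mul _).sub_const _
  have h' := h.cexp
  refine HasDerivAt.congr_deriv h' ?_
  simp only [KK]; ring

lemma KK_d1 (k l : ℝ) (m : ℂ) (x y z : ℝ) :
    HasDerivAt (fun y => KK k l m x y z) (-(Complex.I * l) * KK k l m x y z) y := by
  have h : HasDerivAt (fun y : ℝ => -Complex.I * ((k : ℂ) * x + (l : ℂ) * y) - Complex.I * m * z)
      (-Complex.I * (l * 1)) y :=
    ((((hasDerivAt_id y).ofReal_comp.const_mul (l : ℂ)).const_add _).const_mul _).sub_const _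
  have h' := h.cexp
  refine HasDerivAt.congr_deriv h' ?_
  simp only [KK]; ring

lemma KK_d2 (k l : ℝ) (m : ℂ) (x y z : ℝ) :
    HasDerivAt (fun z => KK k l m x y z) (-(Complex.I * m) * KK k l m x y z) z := by
  have h : HasDerivAt (fun z : ℝ => -Complex.I * ((k : ℂ) * x + (l : ℂ) * y) - Complex.I * m * z)
      (-(Complex.I * m * 1)) z :=
    ((hasDerivAt_id z).ofReal_comp.const_mul (Complex.I * m)).const_sub _
  have h' := h.cexp
  refine HasDerivAt.congr_deriv h' ?_
  simp only [KK]; ring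

lemma comb (ν : Measure ℝ) (hν : Adm ν) (f g : ℝ → ℝ → ℝ → ℝ → ℝ) (hf : Good f) (hg : Good g)
    (k l : ℝ) (m : ℂ) (hm : m.im ≤ 0) (t : ℝ) (ht : 0 ≤ t) (c : ℂ) :
    Integrable (fun p : ℝ × ℝ × ℝ => -c * KK k l m p.1 p.2.1 p.2.2 * (f p.1 p.2.1 p.2.2 t : ℂ)
        + KK k l m p.1 p.2.1 p.2.2 * (g p.1 p.2.1 p.2.2 t : ℂ))
      ((volume : Measure ℝ).prod ((volume : Measure ℝ).prod ν)) ∧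
    ∫ p : ℝ × ℝ × ℝ, (-c * KK k l m p.1 p.2.1 p.2.2 * (f p.1 p.2.1 p.2.2 t : ℂ)
        + KK k l m p.1 p.2.1 p.2.2 * (g p.1 p.2.1 p.2.2 t : ℂ))
      ∂((volume : Measure ℝ).prod ((volume : Measure ℝ).prod ν))
      = -c * IT ν f k l m t + IT ν g k l m t := by
  have h1 := (int3 ν hν f hf k l m hm t ht).const_mul (-c)
  have h2 := int3 ν hν g hg k l m hm t ht
  simp_rw [mul_assoc]
  refine ⟨h1.add h2, ?_⟩
  rw [integral_add h1 h2, integral_const_mul]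
  rfl

lemma IT_0 (ν : Measure ℝ) (hν : Adm ν) (f : ℝ → ℝ → ℝ → ℝ → ℝ) (hf : Good f)
    (hg : Good (pd 0 f)) (k l : ℝ) (m : ℂ) (hm : m.im ≤ 0) (t : ℝ) (ht : 0 ≤ t) :
    IT ν (pd 0 f) k l m t = Complex.I * k * IT ν f k l m t := by
  have := hν.sf
  obtain ⟨h1, h2⟩ := comb ν hν f (pd 0 f) hf hg k l m hm t ht (Complex.I * k)
  have h3 := ibp_gen ((volume : Measure ℝ).prod ν)
    (fun p : ℝ × ℝ × ℝ => KK k l m p.1 p.2.1 p.2.2 * (f p.1 p.2.1 p.2.2 t : ℂ)) _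
    (fun x b => (KK_d0 k l m x b.1 b.2).mul (hd0 f hf.1 x b.1 b.2 t).ofReal_comp)
    (int3 ν hν f hf k l m hm t ht) h1
  rw [h2] at h3
  linear_combination h3

lemma IT_1 (ν : Measure ℝ) (hν : Adm ν) (f : ℝ → ℝ → ℝ → ℝ → ℝ) (hf : Good f)
    (hg : Good (pd 1 f)) (k l : ℝ) (m : ℂ) (hm : m.im ≤ 0) (t : ℝ) (ht : 0 ≤ t) :
    IT ν (pd 1 f) k l m t = Complex.I * l * IT ν f k l m t := by
  have := hν.sf
  obtain ⟨h1, h2⟩ := comb ν hν f (pd 1 f) hf hg k l m hm t ht (Complex.I * l)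
  rw [integral_prod _ h1] at h2
  have h3 : ∀ᵐ x : ℝ, ∫ q : ℝ × ℝ, (-(Complex.I * l) * KK k l m x q.1 q.2 * (f x q.1 q.2 t : ℂ)
        + KK k l m x q.1 q.2 * (pd 1 f x q.1 q.2 t : ℂ)) ∂((volume : Measure ℝ).prod ν) = 0 := by
    filter_upwards [h1.prod_right_ae, (int3 ν hν f hf k l m hm t ht).prod_right_ae] with x hx hx'
    exact ibp_gen ν (fun q : ℝ × ℝ => KK k l m x q.1 q.2 * (f x q.1 q.2 t : ℂ)) _
      (fun y z => (KK_d1 k l m x y z).mul (hd1 f hf.1 x y z t).ofReal_comp) hx' hx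
  rw [integral_eq_zero_of_ae h3] at h2
  linear_combination -h2

lemma IT_2 (f : ℝ → ℝ → ℝ → ℝ → ℝ) (hf : Good f)
    (hg : Good (pd 2 f)) (k l : ℝ) (m : ℂ) (hm : m.im ≤ 0) (t : ℝ) (ht : 0 ≤ t) :
    IT (volume.restrict (Ioi 0)) (pd 2 f) k l m t =
      Complex.I * m * IT (volume.restrict (Ioi 0)) f k l m t - IT (Measure.dirac 0) f k l m t := by
  obtain ⟨h1, h2⟩ := comb _ adm_Ioi f (pd 2 f) hf hg k l m hm t ht (Complex.I * m)
  rw [integral_prod _ h1] at h2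
  rw [IT_iter _ adm_dirac f hf k l m hm t ht]
  have h3 : ∀ᵐ x : ℝ, ∫ q : ℝ × ℝ, (-(Complex.I * m) * KK k l m x q.1 q.2 * (f x q.1 q.2 t : ℂ)
        + KK k l m x q.1 q.2 * (pd 2 f x q.1 q.2 t : ℂ))
          ∂((volume : Measure ℝ).prod ((volume : Measure ℝ).restrict (Ioi 0))) =
      - ∫ y : ℝ, ∫ z, KK k l m x y z * (f x y z t : ℂ) ∂(Measure.dirac 0) := by
    filter_upwards [h1.prod_right_ae, (int3 _ adm_Ioi f hf k l m hm t ht).prod_right_ae]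
      with x hx hx'
    rw [integral_prod _ hx, ← integral_neg]
    refine integral_congr_ae ?_
    filter_upwards [hx.prod_right_ae, hx'.prod_right_ae] with y hy hy'
    have hd : ∀ z : ℝ, HasDerivAt (fun z => KK k l m x y z * (f x y z t : ℂ)) _ z := fun z =>
      (KK_d2 k l m x y z).mul (hd2 f hf.1 x y z t).ofReal_comp
    have htend := tendsto_zero_of_hasDerivAt_of_integrableOn_Ioi (a := 0)
      (fun z _ => hd z) hy hy'
    have := integral_Ioi_of_hasDerivAt_of_tendsto' (a := 0) (fun z _ => hd z) hy htend
    rw [integral_dirac]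
    simpa using this
  rw [integral_congr_ae h3, integral_neg] at h2
  linear_combination -h2

lemma IT_3 (ν : Measure ℝ) (hν : Adm ν) (f : ℝ → ℝ → ℝ → ℝ → ℝ) (hf : Good f)
    (hg : Good (pd 3 f)) (k l : ℝ) (m : ℂ) (hm : m.im ≤ 0) (t : ℝ) (ht : 0 < t) :
    HasDerivAt (fun τ => IT ν f k l m τ) (IT ν (pd 3 f) k l m t) t := by
  obtain ⟨C, hC⟩ := decay_bound (pd 3 f) hg.2 (t + 1) (by linarith)
  refine (hasDerivAt_integral_of_dominated_loc_of_deriv_le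
    (F := fun τ (p : ℝ × ℝ × ℝ) => KK k l m p.1 p.2.1 p.2.2 * (f p.1 p.2.1 p.2.2 τ : ℂ))
    (F' := fun τ (p : ℝ × ℝ × ℝ) => KK k l m p.1 p.2.1 p.2.2 * (pd 3 f p.1 p.2.1 p.2.2 τ : ℂ))
    (s := Ioo 0 (t + 1)) (Ioo_mem_nhds ht (by linarith))
    (Filter.Eventually.of_forall fun τ => (int_cont f hf.1 k l m τ).aestronglyMeasurable)
    (int3 ν hν f hf k l m hm t ht.le)
    (int_cont (pd 3 f) hg.1 k l m t).aestronglyMeasurable ?_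
    ((bound_int ν hν).const_mul C) ?_).2
  · filter_upwards [ae_nn ν hν] with p hp τ hτ
    exact (norm_le (pd 3 f) k l m hm _ _ _ τ hp).trans (hC _ _ _ τ hp hτ.1.le hτ.2.le)
  · refine Filter.Eventually.of_forall fun p τ _ => ?_
    exact (hd3 f hf.1 p.1 p.2.1 p.2.2 τ).ofReal_comp.const_mul _

lemma ae_pos : ∀ᵐ p ∂((volume : Measure ℝ).prod ((volume : Measure ℝ).prod
    ((volume : Measure ℝ).restrict (Ioi 0)))), 0 < p.2.2 := by
  have h0 : ∀ᵐ z ∂((volume : Measure ℝ).restrict (Ioi 0)), 0 < z :=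
    ae_restrict_mem measurableSet_Ioi
  have h2 := (Measure.quasiMeasurePreserving_snd (μ := (volume : Measure ℝ))).ae h0
  exact (Measure.quasiMeasurePreserving_snd (μ := (volume : Measure ℝ))).ae h2

/-- Linear combination of five transforms. -/
lemma IT_lin (ν : Measure ℝ) (hν : Adm ν) (F f₁ f₂ f₃ f₄ f₅ : ℝ → ℝ → ℝ → ℝ → ℝ)
    (h₁ : Good f₁) (h₂ : Good f₂) (h₃ : Good f₃) (h₄ : Good f₄) (h₅ : Good f₅)
    (a b c : ℝ) (k l : ℝ) (m : ℂ) (hm : m.im ≤ 0) (t : ℝ) (ht : 0 ≤ t)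
    (h : ∀ᵐ p ∂((volume : Measure ℝ).prod ((volume : Measure ℝ).prod ν)),
      a * f₁ p.1 p.2.1 p.2.2 t + b * (f₂ p.1 p.2.1 p.2.2 t + f₃ p.1 p.2.1 p.2.2 t)
        + c * (f₄ p.1 p.2.1 p.2.2 t + f₅ p.1 p.2.1 p.2.2 t) = F p.1 p.2.1 p.2.2 t) :
    IT ν F k l m t = a * IT ν f₁ k l m t + b * (IT ν f₂ k l m t + IT ν f₃ k l m t)
      + c * (IT ν f₄ k l m t + IT ν f₅ k l m t) := by
  have i₁ := int3 ν hν f₁ h₁ k l m hm t ht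
  have i₂ := int3 ν hν f₂ h₂ k l m hm t ht
  have i₃ := int3 ν hν f₃ h₃ k l m hm t ht
  have i₄ := int3 ν hν f₄ h₄ k l m hm t ht
  have i₅ := int3 ν hν f₅ h₅ k l m hm t ht
  simp only [IT]
  rw [← integral_add i₂ i₃, ← integral_add i₄ i₅, ← integral_const_mul, ← integral_const_mul,
    ← integral_const_mul]
  refine Eq.trans ?_ (congrArg (· + _)
    (integral_add (i₁.const_mul (a : ℂ)) ((i₂.add i₃).const_mul (b : ℂ))))
  refine Eq.trans ?_ (integral_add ((i₁.const_mul (a : ℂ)).add ((i₂.add i₃).const_mul (b : ℂ)))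
    ((i₄.add i₅).const_mul (c : ℂ)))
  refine integral_congr_ae ?_
  filter_upwards [h] with p hp
  rw [← hp]
  push_cast
  ring

/-- The boundary transform of a linear combination of boundary values. -/
lemma FT2_lin (g : ℝ → ℝ → ℝ → ℝ) (f₁ f₂ f₃ : ℝ → ℝ → ℝ → ℝ → ℝ)
    (h₁ : Good f₁) (h₂ : Good f₂) (h₃ : Good f₃)
    (b : ℝ) (k l : ℝ) (m : ℂ) (hm : m.im ≤ 0) (t : ℝ) (ht : 0 ≤ t)
    (h : ∀ x y, f₁ x y 0 t + b * (f₂ x y 0 t + f₃ x y 0 t) = g x y t) :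
    FT2 g k l t = IT (Measure.dirac 0) f₁ k l m t
      + b * (IT (Measure.dirac 0) f₂ k l m t + IT (Measure.dirac 0) f₃ k l m t) := by
  have i₁ := int3 _ adm_dirac f₁ h₁ k l m hm t ht
  have i₂ := int3 _ adm_dirac f₂ h₂ k l m hm t ht
  have i₃ := int3 _ adm_dirac f₃ h₃ k l m hm t ht
  have j := i₁.add ((i₂.add i₃).const_mul (b : ℂ))
  have e := integral_add i₁ ((i₂.add i₃).const_mul (b : ℂ))
  rw [integral_const_mul, integral_add' i₂ i₃] at e
  refine Eq.trans ?_ e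
  refine Eq.trans ?_ (integral_prod _ j).symm
  rw [FT2]
  refine integral_congr_ae ?_
  filter_upwards [j.prod_right_ae] with x hx
  refine Eq.trans ?_ (integral_prod _ hx).symm
  refine integral_congr_ae (Filter.Eventually.of_forall fun y => ?_)
  simp only [integral_dirac, ← h x y, KK, Pi.add_apply]
  push_cast
  simp
  ring

/-- under the Lamé–Navier equations, decay, and the stress boundary conditions,
the combination `P = kû + lv̂ + mŵ` of the half-space Fourier transforms satisfies the ODE
`∂²ₜP + (λ+2μ)(k²+l²+m²)P = F_P` for all `k, l ∈ ℝ`, `Im m ≤ 0`, `t > 0`. -/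
theorem global_ODE_P (lam mu : ℝ) (hmu : 0 < mu) (hl : 0 < lam + 2 * mu)
    (u v w : ℝ → ℝ → ℝ → ℝ → ℝ) (g₁ g₂ g₃ : ℝ → ℝ → ℝ → ℝ)
    (hsu : Smooth4 u) (hsv : Smooth4 v) (hsw : Smooth4 w)
    (hpde : LameNavier lam mu u v w)
    (hdu : DecaysAll u) (hdv : DecaysAll v) (hdw : DecaysAll w)
    (hg₁ : Continuous fun p : ℝ × ℝ × ℝ => g₁ p.1 p.2.1 p.2.2)
    (hg₂ : Continuous fun p : ℝ × ℝ × ℝ => g₂ p.1 p.2.1 p.2.2)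
    (hg₃ : Continuous fun p : ℝ × ℝ × ℝ => g₃ p.1 p.2.1 p.2.2)
    (hbc : StressBC lam mu u v w g₁ g₂ g₃) :
    ∀ (k l : ℝ) (m : ℂ), m.im ≤ 0 → ∀ t : ℝ, 0 < t →
      deriv (deriv (fun τ : ℝ =>
          (k : ℂ) * FT3 u k l m τ + (l : ℂ) * FT3 v k l m τ + m * FT3 w k l m τ)) t
        + ((lam : ℂ) + 2 * (mu : ℂ)) * ((k : ℂ) ^ 2 + (l : ℂ) ^ 2 + m ^ 2) *
            ((k : ℂ) * FT3 u k l m t + (l : ℂ) * FT3 v k l m t + m * FT3 w k l m t)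
        = FP lam mu u v w g₁ g₂ g₃ k l m t := by
  intro k l m hm t ht
  have gu : Good u := ⟨hsu, hdu.1⟩
  have gv : Good v := ⟨hsv, hdv.1⟩
  have gw : Good w := ⟨hsw, hdw.1⟩
  have gu1 : ∀ i, Good (pd i u) := fun i => ⟨pd_smooth u hsu i, hdu.2.1 i⟩
  have gv1 : ∀ i, Good (pd i v) := fun i => ⟨pd_smooth v hsv i, hdv.2.1 i⟩
  have gw1 : ∀ i, Good (pd i w) := fun i => ⟨pd_smooth w hsw i, hdw.2.1 i⟩
  have gu2 : ∀ i j, Good (pd i (pd j u)) := fun i j =>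
    ⟨pd_smooth _ (pd_smooth u hsu j) i, hdu.2.2 i j⟩
  have gv2 : ∀ i j, Good (pd i (pd j v)) := fun i j =>
    ⟨pd_smooth _ (pd_smooth v hsv j) i, hdv.2.2 i j⟩
  have gw2 : ∀ i j, Good (pd i (pd j w)) := fun i j =>
    ⟨pd_smooth _ (pd_smooth w hsw j) i, hdw.2.2 i j⟩
  have ht0 := ht.le
  set ν : Measure ℝ := (volume : Measure ℝ).restrict (Ioi 0) with hν
  have aν : Adm ν := adm_Ioi
  have aδ := adm_dirac
  -- time derivatives
  have hP : ∀ τ : ℝ, 0 < τ →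
      (k : ℂ) * FT3 u k l m τ + (l : ℂ) * FT3 v k l m τ + m * FT3 w k l m τ =
      (k : ℂ) * IT ν u k l m τ + (l : ℂ) * IT ν v k l m τ + m * IT ν w k l m τ := fun τ hτ => by
    rw [FT3_eq u gu k l m hm τ hτ.le, FT3_eq v gv k l m hm τ hτ.le, FT3_eq w gw k l m hm τ hτ.le]
  have hP1 : ∀ τ : ℝ, 0 < τ → HasDerivAt (fun τ : ℝ =>
      (k : ℂ) * FT3 u k l m τ + (l : ℂ) * FT3 v k l m τ + m * FT3 w k l m τ)
      ((k : ℂ) * IT ν (pd 3 u) k l m τ + (l : ℂ) * IT ν (pd 3 v) k l m τ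
        + m * IT ν (pd 3 w) k l m τ) τ := fun τ hτ => by
    have h := (((IT_3 ν aν u gu (gu1 3) k l m hm τ hτ).const_mul (k : ℂ)).add
      ((IT_3 ν aν v gv (gv1 3) k l m hm τ hτ).const_mul (l : ℂ))).add
      ((IT_3 ν aν w gw (gw1 3) k l m hm τ hτ).const_mul m)
    refine h.congr_of_eventuallyEq ?_
    filter_upwards [Ioi_mem_nhds hτ] with s hs
    exact hP s hs
  have hP2 : deriv (deriv (fun τ : ℝ =>
      (k : ℂ) * FT3 u k l m τ + (l : ℂ) * FT3 v k l m τ + m * FT3 w k l m τ)) t =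
      (k : ℂ) * IT ν (pd 3 (pd 3 u)) k l m t + (l : ℂ) * IT ν (pd 3 (pd 3 v)) k l m t
        + m * IT ν (pd 3 (pd 3 w)) k l m t := by
    have h := (((IT_3 ν aν _ (gu1 3) (gu2 3 3) k l m hm t ht).const_mul (k : ℂ)).add
      ((IT_3 ν aν _ (gv1 3) (gv2 3 3) k l m hm t ht).const_mul (l : ℂ))).add
      ((IT_3 ν aν _ (gw1 3) (gw2 3 3) k l m hm t ht).const_mul m)
    refine (h.congr_of_eventuallyEq ?_).deriv
    filter_upwards [Ioi_mem_nhds ht] with s hs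
    exact (hP1 s hs).deriv
  -- the equations
  have eu := IT_lin ν aν (pd 3 (pd 3 u)) _ _ _ _ _ (gu2 0 0) (gv2 0 1) (gw2 0 2) (gu2 1 1)
    (gu2 2 2) (lam + 2 * mu) (lam + mu) mu k l m hm t ht0 (by
      filter_upwards [ae_pos] with p hp using (hpde _ _ _ t hp ht).1)
  have ev := IT_lin ν aν (pd 3 (pd 3 v)) _ _ _ _ _ (gv2 1 1) (gw2 1 2) (gu2 1 0) (gv2 2 2)
    (gv2 0 0) (lam + 2 * mu) (lam + mu) mu k l m hm t ht0 (by
      filter_upwards [ae_pos] with p hp using (hpde _ _ _ t hp ht).2.1)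
  have ew := IT_lin ν aν (pd 3 (pd 3 w)) _ _ _ _ _ (gw2 2 2) (gu2 2 0) (gv2 2 1) (gw2 0 0)
    (gw2 1 1) (lam + 2 * mu) (lam + mu) mu k l m hm t ht0 (by
      filter_upwards [ae_pos] with p hp using (hpde _ _ _ t hp ht).2.2)
  -- transforms of derivatives
  have d0 := fun (ρ : Measure ℝ) (a : Adm ρ) f (h : Good f) h' =>
    IT_0 ρ a f h h' k l m hm t ht0
  have d1 := fun (ρ : Measure ℝ) (a : Adm ρ) f (h : Good f) h' =>
    IT_1 ρ a f h h' k l m hm t ht0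
  have d2 := fun f (h : Good f) h' => IT_2 f h h' k l m hm t ht0
  rw [d0 ν aν _ (gu1 0) (gu2 0 0), d0 ν aν _ gu (gu1 0), d0 ν aν _ (gv1 1) (gv2 0 1),
    d1 ν aν _ gv (gv1 1), d0 ν aν _ (gw1 2) (gw2 0 2), d2 _ gw (gw1 2),
    d1 ν aν _ (gu1 1) (gu2 1 1), d1 ν aν _ gu (gu1 1), d2 _ (gu1 2) (gu2 2 2),
    d2 _ gu (gu1 2)] at eu
  rw [d1 ν aν _ (gv1 1) (gv2 1 1), d1 ν aν _ gv (gv1 1), d1 ν aν _ (gw1 2) (gw2 1 2),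
    d2 _ gw (gw1 2), d1 ν aν _ (gu1 0) (gu2 1 0), d0 ν aν _ gu (gu1 0),
    d2 _ (gv1 2) (gv2 2 2), d2 _ gv (gv1 2), d0 ν aν _ (gv1 0) (gv2 0 0),
    d0 ν aν _ gv (gv1 0)] at ev
  rw [d2 _ (gw1 2) (gw2 2 2), d2 _ gw (gw1 2), d2 _ (gu1 0) (gu2 2 0), d0 ν aν _ gu (gu1 0),
    d0 _ aδ _ gu (gu1 0), d2 _ (gv1 1) (gv2 2 1), d1 ν aν _ gv (gv1 1),
    d1 _ aδ _ gv (gv1 1), d0 ν aν _ (gw1 0) (gw2 0 0), d0 ν aν _ gw (gw1 0),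
    d1 ν aν _ (gw1 1) (gw2 1 1), d1 ν aν _ gw (gw1 1)] at ew
  -- boundary data
  have b1 := FT2_lin g₁ (pd 2 u) (pd 0 w) (pd 0 w) (gu1 2) (gw1 0) (gw1 0) (1 / 2) k l m hm t ht0
    (fun x y => by rw [← (hbc x y t ht).1]; ring)
  have b2 := FT2_lin g₂ (pd 2 v) (pd 1 w) (pd 1 w) (gv1 2) (gw1 1) (gw1 1) (1 / 2) k l m hm t ht0
    (fun x y => by rw [← (hbc x y t ht).2.1]; ring)
  have b3 := FT2_lin g₃ (pd 2 w) (pd 0 u) (pd 1 v) (gw1 2) (gu1 0) (gv1 1)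
    (lam / (lam + 2 * mu)) k l m hm t ht0 (fun x y => (hbc x y t ht).2.2)
  rw [d0 _ aδ _ gw (gw1 0)] at b1
  rw [d1 _ aδ _ gw (gw1 1)] at b2
  rw [d0 _ aδ _ gu (gu1 0), d1 _ aδ _ gv (gv1 1)] at b3
  have hne : (lam : ℂ) + 2 * (mu : ℂ) ≠ 0 := by exact_mod_cast hl.ne'
  have b3' : ((lam : ℂ) + 2 * (mu : ℂ)) * FT2 g₃ k l t =
      ((lam : ℂ) + 2 * (mu : ℂ)) * IT (Measure.dirac 0) (pd 2 w) k l m t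
      + lam * (Complex.I * k * IT (Measure.dirac 0) u k l m t
        + Complex.I * l * IT (Measure.dirac 0) v k l m t) := by
    rw [b3]; push_cast; field_simp
  rw [hP2, hP t ht, eu, ev, ew, FP, b1, b2, b3', FT2_eq u gu k l m hm t ht0,
    FT2_eq v gv k l m hm t ht0, FT2_eq w gw k l m hm t ht0]
  push_cast
  ring_nf
  simp only [Complex.I_sq]
  ring
end
end

section
/- Under the stated hypotheses, for all k, l ∈ ℝ, all m ∈ ℂ with Im m ≤ 0, and all t > 0, the function Q(k,l,m,t) := m·v̂(k,l,m,t) − l·ŵ(k,l,m,t) satisfies the ordinary differential equation ∂²ₜQ + μ(k²+l²+m²)Q = F_Q(k,l,m,t), where F_Q := ( (λ+2μ)l·g̃₃ + iμkl·ũ + iμl²·ṽ ) + m·( −μ·g̃₂ + 2iμl·w̃ ) − i μ m²·ṽ. -/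
open MeasureTheory Set

noncomputable section

namespace QAux

/-- The weight dominating every integrand. -/
def wt (x : ℝ) : ℝ := (1 + x ^ 2)⁻¹

lemma wt_pos (x : ℝ) : 0 < wt x := by unfold wt; positivity

lemma wt_le (x : ℝ) : wt x ≤ 1 := by
  unfold wt; exact inv_le_one_of_one_le₀ (by nlinarith [sq_nonneg x])

lemma wt_int : Integrable wt volume := integrable_inv_one_add_sq

/-- Half-line measure. -/
def nu : Measure ℝ := volume.restrict (Ici 0)

instance : SFinite nu := by unfold nu; infer_instance

lemma wt_int_nu : Integrable wt nu := wt_int.restrict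

/-- The measure on the half space. -/
def M3 : Measure (ℝ × ℝ × ℝ) := (volume : Measure ℝ).prod ((volume : Measure ℝ).prod nu)

lemma ae_nu : ∀ᵐ z ∂nu, 0 < z := by
  unfold nu
  rw [Measure.restrict_congr_set Ioi_ae_eq_Ici.symm]
  exact ae_restrict_mem measurableSet_Ioi

lemma ae_yz : ∀ᵐ q ∂((volume : Measure ℝ).prod nu), 0 < q.2 :=
  Measure.quasiMeasurePreserving_snd.ae ae_nu

lemma ae_M3 : ∀ᵐ p ∂M3, 0 < p.2.2 :=
  Measure.quasiMeasurePreserving_snd.ae ae_yz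

/-- Continuous functions on the half space with an integrable product bound. -/
structure Good (F : ℝ → ℝ → ℝ → ℂ) : Prop where
  cont : Continuous fun p : ℝ × ℝ × ℝ => F p.1 p.2.1 p.2.2
  bd : ∃ C : ℝ, 0 ≤ C ∧ ∀ x y z, 0 ≤ z → ‖F x y z‖ ≤ C * (wt x * (wt y * wt z))

lemma wt3_int : Integrable (fun p : ℝ × ℝ × ℝ => wt p.1 * (wt p.2.1 * wt p.2.2)) M3 :=
  wt_int.mul_prod (wt_int.mul_prod wt_int_nu)

lemma Good.int3 {F} (h : Good F) : Integrable (fun p : ℝ × ℝ × ℝ => F p.1 p.2.1 p.2.2) M3 := by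
  obtain ⟨C, hC, hb⟩ := h.bd
  refine (wt3_int.const_mul C).mono' h.cont.aestronglyMeasurable ?_
  filter_upwards [ae_M3] with p hp using hb _ _ _ hp.le

lemma Good.intyz {F} (h : Good F) (x : ℝ) :
    Integrable (fun q : ℝ × ℝ => F x q.1 q.2) ((volume : Measure ℝ).prod nu) := by
  obtain ⟨C, hC, hb⟩ := h.bd
  refine ((wt_int.mul_prod wt_int_nu).const_mul (C * wt x)).mono' ?_ ?_
  · exact (h.cont.comp (f := fun q : ℝ × ℝ => (x, q.1, q.2)) (by fun_prop)).aestronglyMeasurable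
  · filter_upwards [ae_yz] with q hq
    refine (hb x q.1 q.2 hq.le).trans (le_of_eq (by ring))

lemma Good.intxy {F} (h : Good F) :
    Integrable (fun q : ℝ × ℝ => F q.1 q.2 0) ((volume : Measure ℝ).prod volume) := by
  obtain ⟨C, hC, hb⟩ := h.bd
  refine ((wt_int.mul_prod wt_int).const_mul C).mono' ?_ ?_
  · exact (h.cont.comp (f := fun q : ℝ × ℝ => (q.1, q.2, 0)) (by fun_prop)).aestronglyMeasurable
  · refine Filter.Eventually.of_forall fun q => ?_
    refine (hb q.1 q.2 0 le_rfl).trans (le_of_eq ?_)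
    simp [wt]

lemma Good.intx {F} (h : Good F) (y z : ℝ) (hz : 0 ≤ z) : Integrable (fun x => F x y z) := by
  obtain ⟨C, hC, hb⟩ := h.bd
  refine (wt_int.const_mul (C * (wt y * wt z))).mono' ?_ ?_
  · exact (h.cont.comp (f := fun x : ℝ => (x, y, z)) (by fun_prop)).aestronglyMeasurable
  · refine Filter.Eventually.of_forall fun x => ?_
    refine (hb x y z hz).trans (le_of_eq (by ring))

lemma Good.inty {F} (h : Good F) (x z : ℝ) (hz : 0 ≤ z) : Integrable (fun y => F x y z) := by
  obtain ⟨C, hC, hb⟩ := h.bd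
  refine (wt_int.const_mul (C * (wt x * wt z))).mono' ?_ ?_
  · exact (h.cont.comp (f := fun y : ℝ => (x, y, z)) (by fun_prop)).aestronglyMeasurable
  · refine Filter.Eventually.of_forall fun y => ?_
    refine (hb x y z hz).trans (le_of_eq (by ring))

lemma Good.intz {F} (h : Good F) (x y : ℝ) : Integrable (fun z => F x y z) nu := by
  obtain ⟨C, hC, hb⟩ := h.bd
  refine (wt_int_nu.const_mul (C * (wt x * wt y))).mono' ?_ ?_
  · exact (h.cont.comp (f := fun z : ℝ => (x, y, z)) (by fun_prop)).aestronglyMeasurable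
  · filter_upwards [ae_nu] with z hz
    refine (hb x y z hz.le).trans (le_of_eq (by ring))

lemma Good.add {F G} (hF : Good F) (hG : Good G) : Good (fun x y z => F x y z + G x y z) := by
  refine ⟨hF.cont.add hG.cont, ?_⟩
  obtain ⟨C, hC, hb⟩ := hF.bd
  obtain ⟨D, hD, hd⟩ := hG.bd
  refine ⟨C + D, by positivity, fun x y z hz => (norm_add_le _ _).trans ?_⟩
  rw [add_mul]
  exact add_le_add (hb x y z hz) (hd x y z hz)

lemma Good.const_mul {F} (hF : Good F) (c : ℂ) : Good (fun x y z => c * F x y z) := by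
  refine ⟨continuous_const.mul hF.cont, ?_⟩
  obtain ⟨C, hC, hb⟩ := hF.bd
  refine ⟨‖c‖ * C, by positivity, fun x y z hz => ?_⟩
  rw [norm_mul, mul_assoc]
  exact mul_le_mul_of_nonneg_left (hb x y z hz) (norm_nonneg _)

/-- Iterated integral over the half space. -/
def I3 (F : ℝ → ℝ → ℝ → ℂ) : ℂ := ∫ x : ℝ, ∫ y : ℝ, ∫ z in Ici (0 : ℝ), F x y z

/-- Iterated integral over the boundary. -/
def I2 (F : ℝ → ℝ → ℝ → ℂ) : ℂ := ∫ x : ℝ, ∫ y : ℝ, F x y 0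

lemma Good.I3_eq {F} (h : Good F) : I3 F = ∫ p, F p.1 p.2.1 p.2.2 ∂M3 := by
  unfold M3
  rw [integral_prod _ h.int3]
  refine integral_congr_ae (Filter.Eventually.of_forall fun x => ?_)
  exact (integral_prod _ (h.intyz x)).symm

lemma Good.I2_eq {F} (h : Good F) :
    I2 F = ∫ p : ℝ × ℝ, F p.1 p.2 0 ∂((volume : Measure ℝ).prod volume) :=
  (integral_prod _ h.intxy).symm

lemma I3_add {F G} (hF : Good F) (hG : Good G) :
    I3 (fun x y z => F x y z + G x y z) = I3 F + I3 G := by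
  rw [hF.I3_eq, hG.I3_eq, (hF.add hG).I3_eq]
  exact integral_add hF.int3 hG.int3

lemma I3_mul {F} (hF : Good F) (c : ℂ) : I3 (fun x y z => c * F x y z) = c * I3 F := by
  rw [hF.I3_eq, (hF.const_mul c).I3_eq]
  exact integral_const_mul _ _

lemma I2_add {F G} (hF : Good F) (hG : Good G) :
    I2 (fun x y z => F x y z + G x y z) = I2 F + I2 G := by
  rw [hF.I2_eq, hG.I2_eq, (hF.add hG).I2_eq]
  exact integral_add hF.intxy hG.intxy

lemma I2_mul {F} (hF : Good F) (c : ℂ) : I2 (fun x y z => c * F x y z) = c * I2 F := by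
  rw [hF.I2_eq, (hF.const_mul c).I2_eq]
  exact integral_const_mul _ _

lemma I3_congr {F G} (hF : Good F) (hG : Good G) (h : ∀ x y z, 0 < z → F x y z = G x y z) :
    I3 F = I3 G := by
  rw [hF.I3_eq, hG.I3_eq]
  refine integral_congr_ae ?_
  filter_upwards [ae_M3] with p hp using h _ _ _ hp

lemma I3_dx {F F'} (hF : Good F) (hF' : Good F')
    (hd : ∀ x y z, HasDerivAt (fun x => F x y z) (F' x y z) x) : I3 F' = 0 := by
  rw [hF'.I3_eq]
  unfold M3
  rw [integral_prod_symm _ hF'.int3]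
  refine integral_eq_zero_of_ae ?_
  filter_upwards [ae_yz] with q hq
  exact integral_eq_zero_of_hasDerivAt_of_integrable (fun x => hd x q.1 q.2)
    (hF'.intx _ _ hq.le) (hF.intx _ _ hq.le)

lemma I3_dy {F F'} (hF : Good F) (hF' : Good F')
    (hd : ∀ x y z, HasDerivAt (fun y => F x y z) (F' x y z) y) : I3 F' = 0 := by
  unfold I3
  refine integral_eq_zero_of_ae (Filter.Eventually.of_forall fun x => ?_)
  refine (integral_integral_swap (ν := nu) (f := fun y z => F' x y z) (hF'.intyz x)).trans ?_
  refine integral_eq_zero_of_ae ?_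
  filter_upwards [ae_nu] with z hz
  exact integral_eq_zero_of_hasDerivAt_of_integrable (fun y => hd x y z)
    (hF'.inty _ _ hz.le) (hF.inty _ _ hz.le)

lemma I3_dz {F F'} (hF : Good F) (hF' : Good F')
    (hd : ∀ x y z, HasDerivAt (fun z => F x y z) (F' x y z) z) : I3 F' = - I2 F := by
  unfold I3 I2
  rw [← integral_neg]
  refine integral_congr_ae (Filter.Eventually.of_forall fun x => ?_)
  simp only
  rw [← integral_neg]
  refine integral_congr_ae (Filter.Eventually.of_forall fun y => ?_)
  simp only
  have h1 : IntegrableOn (fun z => F x y z) (Ioi 0) :=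
    IntegrableOn.mono_set (hF.intz x y) Ioi_subset_Ici_self
  have h2 : IntegrableOn (fun z => F' x y z) (Ioi 0) :=
    IntegrableOn.mono_set (hF'.intz x y) Ioi_subset_Ici_self
  rw [integral_Ici_eq_integral_Ioi, integral_Ioi_of_hasDerivAt_of_tendsto
    (hd x y 0).continuousAt.continuousWithinAt (fun z _ => hd x y z) h2
    (tendsto_zero_of_hasDerivAt_of_integrableOn_Ioi (fun z _ => hd x y z) h2 h1), zero_sub]

lemma I2_dx {F F'} (hF : Good F) (hF' : Good F')
    (hd : ∀ x y z, HasDerivAt (fun x => F x y z) (F' x y z) x) : I2 F' = 0 := by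
  rw [hF'.I2_eq, integral_prod_symm _ hF'.intxy]
  refine integral_eq_zero_of_ae (Filter.Eventually.of_forall fun y => ?_)
  exact integral_eq_zero_of_hasDerivAt_of_integrable (fun x => hd x y 0)
    (hF'.intx _ _ le_rfl) (hF.intx _ _ le_rfl)

lemma I2_dy {F F'} (hF : Good F) (hF' : Good F')
    (hd : ∀ x y z, HasDerivAt (fun y => F x y z) (F' x y z) y) : I2 F' = 0 := by
  unfold I2
  refine integral_eq_zero_of_ae (Filter.Eventually.of_forall fun x => ?_)
  exact integral_eq_zero_of_hasDerivAt_of_integrable (fun y => hd x y 0)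
    (hF'.inty _ _ le_rfl) (hF.inty _ _ le_rfl)

/-- Smooth and decaying. -/
structure Nice (f : ℝ → ℝ → ℝ → ℝ → ℝ) : Prop where
  sm : Smooth4 f
  dec : Decays f

lemma hd0 {f} (h : Smooth4 f) (x y z t : ℝ) :
    HasDerivAt (fun x => f x y z t) (pd 0 f x y z t) x := by
  have : DifferentiableAt ℝ (fun x => f x y z t) x :=
    ((ContDiff.differentiable h (by simp)).comp
      (f := fun x : ℝ => (x, y, z, t)) (by fun_prop)).differentiableAt
  exact this.hasDerivAt

lemma hd1 {f} (h : Smooth4 f) (x y z t : ℝ) :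
    HasDerivAt (fun y => f x y z t) (pd 1 f x y z t) y := by
  have : DifferentiableAt ℝ (fun y => f x y z t) y :=
    ((ContDiff.differentiable h (by simp)).comp
      (f := fun y : ℝ => (x, y, z, t)) (by fun_prop)).differentiableAt
  exact this.hasDerivAt

lemma hd2 {f} (h : Smooth4 f) (x y z t : ℝ) :
    HasDerivAt (fun z => f x y z t) (pd 2 f x y z t) z := by
  have : DifferentiableAt ℝ (fun z => f x y z t) z :=
    ((ContDiff.differentiable h (by simp)).comp
      (f := fun z : ℝ => (x, y, z, t)) (by fun_prop)).differentiableAt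
  exact this.hasDerivAt

lemma hd3 {f} (h : Smooth4 f) (x y z t : ℝ) :
    HasDerivAt (fun t => f x y z t) (pd 3 f x y z t) t := by
  have : DifferentiableAt ℝ (fun t => f x y z t) t :=
    ((ContDiff.differentiable h (by simp)).comp
      (f := fun t : ℝ => (x, y, z, t)) (by fun_prop)).differentiableAt
  exact this.hasDerivAt

lemma smooth_of_dir {f : ℝ → ℝ → ℝ → ℝ → ℝ} (h : Smooth4 f) (e : ℝ × ℝ × ℝ × ℝ)
    {g : ℝ → ℝ → ℝ → ℝ → ℝ}
    (hg : ∀ x y z t, HasDerivAt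
      (fun s : ℝ => f (x + s * e.1) (y + s * e.2.1) (z + s * e.2.2.1) (t + s * e.2.2.2))
      (g x y z t) 0) : Smooth4 g := by
  unfold Smooth4 at h ⊢
  have h1 : ContDiff ℝ (⊤ : ℕ∞) (fun p => fderiv ℝ
      (fun p : ℝ × ℝ × ℝ × ℝ => f p.1 p.2.1 p.2.2.1 p.2.2.2) p e) :=
    (h.fderiv_right (m := (⊤ : ℕ∞)) (by simp)).clm_apply contDiff_const
  convert h1 using 2 with p
  obtain ⟨x, y, z, t⟩ := p
  refine (hg x y z t).unique ?_
  have hdf := ((h.differentiable (by simp)) (x, y, z, t)).hasFDerivAt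
  have hl := hdf.hasLineDerivAt e
  unfold HasLineDerivAt at hl
  simpa using hl

lemma smooth_pd {f} (h : Smooth4 f) (i : Fin 4) : Smooth4 (pd i f) := by
  have key : ∀ (a : ℝ), HasDerivAt (fun s : ℝ => a + s * 1) 1 0 := fun a => by
    simpa using (hasDerivAt_id (0 : ℝ)).const_add a
  fin_cases i
  · refine smooth_of_dir h (1, 0, 0, 0) fun x y z t => ?_
    have := (show HasDerivAt (fun x => f x y z t) (pd 0 f x y z t) (x + 0 * 1) by
      simpa using hd0 h x y z t).comp 0 (key x)
    simpa [Function.comp_def] using this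
  · refine smooth_of_dir h (0, 1, 0, 0) fun x y z t => ?_
    have := (show HasDerivAt (fun y => f x y z t) (pd 1 f x y z t) (y + 0 * 1) by
      simpa using hd1 h x y z t).comp 0 (key y)
    simpa [Function.comp_def] using this
  · refine smooth_of_dir h (0, 0, 1, 0) fun x y z t => ?_
    have := (show HasDerivAt (fun z => f x y z t) (pd 2 f x y z t) (z + 0 * 1) by
      simpa using hd2 h x y z t).comp 0 (key z)
    simpa [Function.comp_def] using this
  · refine smooth_of_dir h (0, 0, 0, 1) fun x y z t => ?_
    have := (show HasDerivAt (fun t => f x y z t) (pd 3 f x y z t) (t + 0 * 1) by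
      simpa using hd3 h x y z t).comp 0 (key t)
    simpa [Function.comp_def] using this

/-- The Fourier kernel. -/
def K (k l : ℝ) (m : ℂ) (x y z : ℝ) : ℂ :=
  Complex.exp (-Complex.I * ((k : ℂ) * x + (l : ℂ) * y) - Complex.I * m * z)

lemma K_cont (k l : ℝ) (m : ℂ) : Continuous fun p : ℝ × ℝ × ℝ => K k l m p.1 p.2.1 p.2.2 := by
  unfold K; fun_prop

lemma K_norm (k l : ℝ) (m : ℂ) (hm : m.im ≤ 0) (x y z : ℝ) (hz : 0 ≤ z) :
    ‖K k l m x y z‖ ≤ 1 := by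
  unfold K
  rw [Complex.norm_exp, Real.exp_le_one_iff]
  simp
  nlinarith

lemma Nice.bound {f} (h : Nice f) (T : ℝ) (hT : 0 < T) : ∃ C : ℝ, 0 ≤ C ∧
    ∀ x y z t, 0 ≤ z → 0 ≤ t → t ≤ T → |f x y z t| ≤ C * (wt x * (wt y * wt z)) := by
  obtain ⟨C, hC⟩ := h.dec T hT 6
  have hC0 : 0 ≤ C := by
    have := hC 0 0 0 0 le_rfl le_rfl hT.le
    simp at this
    exact (abs_nonneg _).trans this
  refine ⟨C, hC0, fun x y z t hz ht htT => (hC x y z t hz ht htT).trans ?_⟩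
  unfold wt
  rw [← mul_inv, ← mul_inv, div_eq_mul_inv]
  refine mul_le_mul_of_nonneg_left ?_ hC0
  refine inv_anti₀ (by positivity) ?_
  have hx := abs_nonneg x
  have hy := abs_nonneg y
  have e : (1 + |x| + |y| + z) ^ 6 = (1 + |x| + |y| + z) ^ 2 *
    ((1 + |x| + |y| + z) ^ 2 * (1 + |x| + |y| + z) ^ 2) := by ring
  rw [e]
  have b1 : 1 + x ^ 2 ≤ (1 + |x| + |y| + z) ^ 2 := by
    rw [← sq_abs x]; nlinarith [mul_nonneg hx hy, mul_nonneg hx hz, mul_nonneg hy hz]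
  have b2 : 1 + y ^ 2 ≤ (1 + |x| + |y| + z) ^ 2 := by
    rw [← sq_abs y]; nlinarith [mul_nonneg hx hy, mul_nonneg hx hz, mul_nonneg hy hz]
  have b3 : 1 + z ^ 2 ≤ (1 + |x| + |y| + z) ^ 2 := by
    nlinarith [mul_nonneg hx hy, mul_nonneg hx hz, mul_nonneg hy hz]
  gcongr

lemma Nice.cont3 {f} (h : Nice f) (t : ℝ) :
    Continuous fun p : ℝ × ℝ × ℝ => f p.1 p.2.1 p.2.2 t :=
  (ContDiff.continuous h.sm).comp (f := fun p : ℝ × ℝ × ℝ => (p.1, p.2.1, p.2.2, t)) (by fun_prop)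

lemma Nice.K_cont {f} (h : Nice f) (k l : ℝ) (m : ℂ) (t : ℝ) :
    Continuous fun p : ℝ × ℝ × ℝ => K k l m p.1 p.2.1 p.2.2 * (f p.1 p.2.1 p.2.2 t : ℂ) :=
  (QAux.K_cont k l m).mul (Complex.continuous_ofReal.comp (h.cont3 t))

lemma K_mul_norm (k l : ℝ) (m : ℂ) (hm : m.im ≤ 0) (x y z : ℝ) (hz : 0 ≤ z) (a : ℝ) :
    ‖K k l m x y z * (a : ℂ)‖ ≤ |a| := by
  rw [norm_mul, Complex.norm_real, Real.norm_eq_abs]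
  exact mul_le_of_le_one_left (abs_nonneg _) (K_norm k l m hm x y z hz)

lemma Nice.good {f} (h : Nice f) (k l : ℝ) (m : ℂ) (hm : m.im ≤ 0) (t : ℝ) (ht : 0 < t) :
    Good (fun x y z => K k l m x y z * (f x y z t : ℂ)) := by
  refine ⟨h.K_cont k l m t, ?_⟩
  obtain ⟨C, hC, hb⟩ := h.bound t ht
  exact ⟨C, hC, fun x y z hz =>
    (K_mul_norm k l m hm x y z hz _).trans (hb x y z t hz ht.le le_rfl)⟩

lemma FT3_I3 (f : ℝ → ℝ → ℝ → ℝ → ℝ) (k l : ℝ) (m : ℂ) (t : ℝ) :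
    FT3 f k l m t = I3 (fun x y z => K k l m x y z * (f x y z t : ℂ)) := rfl

/-- Boundary transform of the trace on `z = 0`. -/
lemma FT2_I2 (f : ℝ → ℝ → ℝ → ℝ → ℝ) (k l : ℝ) (m : ℂ) (t : ℝ) :
    FT2 (fun x y τ => f x y 0 τ) k l t = I2 (fun x y z => K k l m x y z * (f x y z t : ℂ)) := by
  simp [FT2, I2, K]

lemma Nice.hasDeriv {f} (h : Nice f) (h3 : Nice (pd 3 f)) (k l : ℝ) (m : ℂ) (hm : m.im ≤ 0)
    (t : ℝ) (ht : 0 < t) :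
    HasDerivAt (fun τ => FT3 f k l m τ) (FT3 (pd 3 f) k l m t) t := by
  obtain ⟨C, hC, hb⟩ := h3.bound (t + 1) (by linarith)
  have key := (hasDerivAt_integral_of_dominated_loc_of_deriv_le (μ := M3)
    (bound := fun p => C * (wt p.1 * (wt p.2.1 * wt p.2.2)))
    (F := fun τ (p : ℝ × ℝ × ℝ) => K k l m p.1 p.2.1 p.2.2 * (f p.1 p.2.1 p.2.2 τ : ℂ))
    (F' := fun τ (p : ℝ × ℝ × ℝ) => K k l m p.1 p.2.1 p.2.2 * (pd 3 f p.1 p.2.1 p.2.2 τ : ℂ))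
    (x₀ := t) (s := Ioo 0 (t + 1)) (Ioo_mem_nhds ht (by linarith))
    (Filter.Eventually.of_forall fun τ => (h.K_cont k l m τ).aestronglyMeasurable)
    (h.good k l m hm t ht).int3 (h3.K_cont k l m t).aestronglyMeasurable
    (by
      filter_upwards [ae_M3] with p hp τ hτ
      exact (K_mul_norm k l m hm _ _ _ hp.le _).trans (hb _ _ _ _ hp.le hτ.1.le hτ.2.le))
    (wt3_int.const_mul C)
    (Filter.Eventually.of_forall fun p τ _ =>
      ((hd3 h.sm p.1 p.2.1 p.2.2 τ).ofReal_comp).const_mul _)).2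
  rw [FT3_I3, (h3.good k l m hm t ht).I3_eq]
  refine key.congr_of_eventuallyEq ?_
  filter_upwards [Ioi_mem_nhds ht] with τ hτ
  rw [FT3_I3, (h.good k l m hm τ hτ).I3_eq]

lemma K_d0 (k l : ℝ) (m : ℂ) (x y z : ℝ) :
    HasDerivAt (fun x => K k l m x y z) (-(Complex.I * k) * K k l m x y z) x := by
  unfold K
  have h : HasDerivAt (fun x : ℝ => -Complex.I * ((k : ℂ) * x + (l : ℂ) * y) - Complex.I * m * z)
      (-Complex.I * ((k : ℂ) * (1 : ℝ))) x :=
    (((((hasDerivAt_id x).ofReal_comp).const_mul (k : ℂ)).add_const _).const_mul _).sub_const _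
  convert h.cexp using 1
  push_cast; ring

lemma K_d1 (k l : ℝ) (m : ℂ) (x y z : ℝ) :
    HasDerivAt (fun y => K k l m x y z) (-(Complex.I * l) * K k l m x y z) y := by
  unfold K
  have h : HasDerivAt (fun y : ℝ => -Complex.I * ((k : ℂ) * x + (l : ℂ) * y) - Complex.I * m * z)
      (-Complex.I * ((l : ℂ) * (1 : ℝ))) y :=
    (((((hasDerivAt_id y).ofReal_comp).const_mul (l : ℂ)).const_add _).const_mul _).sub_const _
  convert h.cexp using 1
  push_cast; ring

lemma K_d2 (k l : ℝ) (m : ℂ) (x y z : ℝ) :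
    HasDerivAt (fun z => K k l m x y z) (-(Complex.I * m) * K k l m x y z) z := by
  unfold K
  have h : HasDerivAt (fun z : ℝ => -Complex.I * ((k : ℂ) * x + (l : ℂ) * y) - Complex.I * m * z)
      (-(Complex.I * m * (1 : ℝ))) z :=
    (((hasDerivAt_id z).ofReal_comp).const_mul (Complex.I * m)).const_sub _
  convert h.cexp using 1
  push_cast; ring

lemma rule0 {f : ℝ → ℝ → ℝ → ℝ → ℝ} (h : Nice f) (h' : Nice (pd 0 f)) (k l : ℝ) (m : ℂ)
    (hm : m.im ≤ 0) (t : ℝ) (ht : 0 < t) :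
    FT3 (pd 0 f) k l m t = Complex.I * k * FT3 f k l m t ∧
    FT2 (fun x y τ => pd 0 f x y 0 τ) k l t
      = Complex.I * k * FT2 (fun x y τ => f x y 0 τ) k l t := by
  have g := h.good k l m hm t ht
  have g' := h'.good k l m hm t ht
  have gc := g.const_mul (-(Complex.I * k))
  have hd : ∀ x y z, HasDerivAt (fun x => K k l m x y z * (f x y z t : ℂ))
      (-(Complex.I * k) * (K k l m x y z * (f x y z t : ℂ))
        + K k l m x y z * (pd 0 f x y z t : ℂ)) x := fun x y z => by
    exact ((K_d0 k l m x y z).mul (hd0 h.sm x y z t).ofReal_comp).congr_deriv (by ring)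
  have e3 := I3_dx g (gc.add g') hd
  have e2 := I2_dx g (gc.add g') hd
  rw [I3_add gc g', I3_mul g] at e3
  rw [I2_add gc g', I2_mul g] at e2
  rw [FT3_I3, FT3_I3, FT2_I2 _ k l m, FT2_I2 _ k l m]
  exact ⟨by linear_combination e3, by linear_combination e2⟩

lemma rule1 {f : ℝ → ℝ → ℝ → ℝ → ℝ} (h : Nice f) (h' : Nice (pd 1 f)) (k l : ℝ) (m : ℂ)
    (hm : m.im ≤ 0) (t : ℝ) (ht : 0 < t) :
    FT3 (pd 1 f) k l m t = Complex.I * l * FT3 f k l m t ∧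
    FT2 (fun x y τ => pd 1 f x y 0 τ) k l t
      = Complex.I * l * FT2 (fun x y τ => f x y 0 τ) k l t := by
  have g := h.good k l m hm t ht
  have g' := h'.good k l m hm t ht
  have gc := g.const_mul (-(Complex.I * l))
  have hd : ∀ x y z, HasDerivAt (fun y => K k l m x y z * (f x y z t : ℂ))
      (-(Complex.I * l) * (K k l m x y z * (f x y z t : ℂ))
        + K k l m x y z * (pd 1 f x y z t : ℂ)) y := fun x y z => by
    exact ((K_d1 k l m x y z).mul (hd1 h.sm x y z t).ofReal_comp).congr_deriv (by ring)
  have e3 := I3_dy g (gc.add g') hd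
  have e2 := I2_dy g (gc.add g') hd
  rw [I3_add gc g', I3_mul g] at e3
  rw [I2_add gc g', I2_mul g] at e2
  rw [FT3_I3, FT3_I3, FT2_I2 _ k l m, FT2_I2 _ k l m]
  exact ⟨by linear_combination e3, by linear_combination e2⟩

lemma rule2 {f : ℝ → ℝ → ℝ → ℝ → ℝ} (h : Nice f) (h' : Nice (pd 2 f)) (k l : ℝ) (m : ℂ)
    (hm : m.im ≤ 0) (t : ℝ) (ht : 0 < t) :
    FT3 (pd 2 f) k l m t = Complex.I * m * FT3 f k l m t
      - FT2 (fun x y τ => f x y 0 τ) k l t := by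
  have g := h.good k l m hm t ht
  have g' := h'.good k l m hm t ht
  have gc := g.const_mul (-(Complex.I * m))
  have hd : ∀ x y z, HasDerivAt (fun z => K k l m x y z * (f x y z t : ℂ))
      (-(Complex.I * m) * (K k l m x y z * (f x y z t : ℂ))
        + K k l m x y z * (pd 2 f x y z t : ℂ)) z := fun x y z => by
    exact ((K_d2 k l m x y z).mul (hd2 h.sm x y z t).ofReal_comp).congr_deriv (by ring)
  have e3 := I3_dz g (gc.add g') hd
  rw [I3_add gc g', I3_mul g] at e3
  rw [FT3_I3, FT3_I3, FT2_I2 _ k l m]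
  linear_combination e3

lemma lin5 {f₁ f₂ f₃ f₄ f₅ f₆ : ℝ → ℝ → ℝ → ℝ → ℝ} (h₁ : Nice f₁) (h₂ : Nice f₂) (h₃ : Nice f₃)
    (h₄ : Nice f₄) (h₅ : Nice f₅) (h₆ : Nice f₆) (a b c : ℝ) (k l : ℝ) (m : ℂ)
    (hm : m.im ≤ 0) (t : ℝ) (ht : 0 < t)
    (h : ∀ x y z, 0 < z → a * f₁ x y z t + b * (f₂ x y z t + f₃ x y z t)
      + c * (f₄ x y z t + f₅ x y z t) = f₆ x y z t) :
    FT3 f₆ k l m t = a * FT3 f₁ k l m t + b * (FT3 f₂ k l m t + FT3 f₃ k l m t)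
      + c * (FT3 f₄ k l m t + FT3 f₅ k l m t) := by
  have g₁ := h₁.good k l m hm t ht
  have g₂ := h₂.good k l m hm t ht
  have g₃ := h₃.good k l m hm t ht
  have g₄ := h₄.good k l m hm t ht
  have g₅ := h₅.good k l m hm t ht
  have g₆ := h₆.good k l m hm t ht
  have A := g₁.const_mul (a : ℂ)
  have B := (g₂.add g₃).const_mul (b : ℂ)
  have D := (g₄.add g₅).const_mul (c : ℂ)
  simp only [FT3_I3]
  rw [← I3_add g₂ g₃, ← I3_add g₄ g₅, ← I3_mul g₁, ← I3_mul (g₂.add g₃), ← I3_mul (g₄.add g₅),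
    ← I3_add A B, ← I3_add (A.add B) D]
  refine I3_congr g₆ ((A.add B).add D) fun x y z hz => ?_
  rw [← h x y z hz]
  push_cast
  ring

lemma lin3 {f₁ f₂ f₃ : ℝ → ℝ → ℝ → ℝ → ℝ} (h₁ : Nice f₁) (h₂ : Nice f₂) (h₃ : Nice f₃)
    (g : ℝ → ℝ → ℝ → ℝ) (a b : ℝ) (k l : ℝ) (t : ℝ) (ht : 0 < t)
    (h : ∀ x y, f₁ x y 0 t + a * f₂ x y 0 t + b * f₃ x y 0 t = g x y t) :
    FT2 g k l t = FT2 (fun x y τ => f₁ x y 0 τ) k l t + a * FT2 (fun x y τ => f₂ x y 0 τ) k l t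
      + b * FT2 (fun x y τ => f₃ x y 0 τ) k l t := by
  have g₁ := h₁.good k l 0 le_rfl t ht
  have g₂ := h₂.good k l 0 le_rfl t ht
  have g₃ := h₃.good k l 0 le_rfl t ht
  have B := g₂.const_mul (a : ℂ)
  have D := g₃.const_mul (b : ℂ)
  simp only [FT2_I2 _ k l 0]
  rw [← I2_mul g₂, ← I2_mul g₃, ← I2_add g₁ B, ← I2_add (g₁.add B) D]
  unfold FT2 I2
  refine integral_congr_ae (Filter.Eventually.of_forall fun x => ?_)
  refine integral_congr_ae (Filter.Eventually.of_forall fun y => ?_)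
  simp only [K, ← h x y]
  push_cast
  simp only [mul_zero, sub_zero]
  ring

end QAux


/-- under the Lamé–Navier equations, decay, and the stress boundary conditions,
the combination `Q = mv̂ − lŵ` of the half-space Fourier transforms satisfies the ODE
`∂²ₜQ + μ(k²+l²+m²)Q = F_Q` for all `k, l ∈ ℝ`, `Im m ≤ 0`, `t > 0`. -/
theorem global_ODE_Q (lam mu : ℝ) (hmu : 0 < mu) (hl : 0 < lam + 2 * mu)
    (u v w : ℝ → ℝ → ℝ → ℝ → ℝ) (g₁ g₂ g₃ : ℝ → ℝ → ℝ → ℝ)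
    (hsu : Smooth4 u) (hsv : Smooth4 v) (hsw : Smooth4 w)
    (hpde : LameNavier lam mu u v w)
    (hdu : DecaysAll u) (hdv : DecaysAll v) (hdw : DecaysAll w)
    (hg₁ : Continuous fun p : ℝ × ℝ × ℝ => g₁ p.1 p.2.1 p.2.2)
    (hg₂ : Continuous fun p : ℝ × ℝ × ℝ => g₂ p.1 p.2.1 p.2.2)
    (hg₃ : Continuous fun p : ℝ × ℝ × ℝ => g₃ p.1 p.2.1 p.2.2)
    (hbc : StressBC lam mu u v w g₁ g₂ g₃) :
    ∀ (k l : ℝ) (m : ℂ), m.im ≤ 0 → ∀ t : ℝ, 0 < t →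
      deriv (deriv (fun τ : ℝ => m * FT3 v k l m τ - (l : ℂ) * FT3 w k l m τ)) t
        + (mu : ℂ) * ((k : ℂ) ^ 2 + (l : ℂ) ^ 2 + m ^ 2) *
            (m * FT3 v k l m t - (l : ℂ) * FT3 w k l m t)
        = FQ lam mu u v w g₁ g₂ g₃ k l m t := by
  intro k l m hm t ht
  have nu0 : QAux.Nice u := ⟨hsu, hdu.1⟩
  have nv0 : QAux.Nice v := ⟨hsv, hdv.1⟩
  have nw0 : QAux.Nice w := ⟨hsw, hdw.1⟩
  have nu1 : ∀ i, QAux.Nice (pd i u) := fun i => ⟨QAux.smooth_pd hsu i, hdu.2.1 i⟩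
  have nv1 : ∀ i, QAux.Nice (pd i v) := fun i => ⟨QAux.smooth_pd hsv i, hdv.2.1 i⟩
  have nw1 : ∀ i, QAux.Nice (pd i w) := fun i => ⟨QAux.smooth_pd hsw i, hdw.2.1 i⟩
  have nu2 : ∀ i j, QAux.Nice (pd i (pd j u)) := fun i j =>
    ⟨QAux.smooth_pd (QAux.smooth_pd hsu j) i, hdu.2.2 i j⟩
  have nv2 : ∀ i j, QAux.Nice (pd i (pd j v)) := fun i j =>
    ⟨QAux.smooth_pd (QAux.smooth_pd hsv j) i, hdv.2.2 i j⟩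
  have nw2 : ∀ i j, QAux.Nice (pd i (pd j w)) := fun i j =>
    ⟨QAux.smooth_pd (QAux.smooth_pd hsw j) i, hdw.2.2 i j⟩
  -- the second time derivative
  have hD : deriv (deriv (fun τ : ℝ => m * FT3 v k l m τ - (l : ℂ) * FT3 w k l m τ)) t
      = m * FT3 (pd 3 (pd 3 v)) k l m t - (l : ℂ) * FT3 (pd 3 (pd 3 w)) k l m t := by
    have e1 : deriv (fun τ : ℝ => m * FT3 v k l m τ - (l : ℂ) * FT3 w k l m τ)
        =ᶠ[nhds t] fun τ => m * FT3 (pd 3 v) k l m τ - (l : ℂ) * FT3 (pd 3 w) k l m τ := by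
      filter_upwards [Ioi_mem_nhds ht] with τ hτ
      exact (((nv0.hasDeriv (nv1 3) k l m hm τ hτ).const_mul m).sub
        ((nw0.hasDeriv (nw1 3) k l m hm τ hτ).const_mul (l : ℂ))).deriv
    rw [e1.deriv_eq]
    exact ((((nv1 3).hasDeriv (nv2 3 3) k l m hm t ht).const_mul m).sub
        (((nw1 3).hasDeriv (nw2 3 3) k l m hm t ht).const_mul (l : ℂ))).deriv
  have hV := QAux.lin5 (nv2 1 1) (nw2 1 2) (nu2 1 0) (nv2 2 2) (nv2 0 0) (nv2 3 3)
    (lam + 2 * mu) (lam + mu) mu k l m hm t ht (fun x y z hz => (hpde x y z t hz ht).2.1)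
  have hW := QAux.lin5 (nw2 2 2) (nu2 2 0) (nv2 2 1) (nw2 0 0) (nw2 1 1) (nw2 3 3)
    (lam + 2 * mu) (lam + mu) mu k l m hm t ht (fun x y z hz => (hpde x y z t hz ht).2.2)
  have hG2 := QAux.lin3 (nv1 2) (nw1 1) (nw1 1) g₂ 1 0 k l t ht
    (fun x y => by simpa using (hbc x y t ht).2.1)
  have hG3 := QAux.lin3 (nw1 2) (nu1 0) (nv1 1) g₃ (lam / (lam + 2 * mu)) (lam / (lam + 2 * mu))
    k l t ht (fun x y => by rw [← (hbc x y t ht).2.2]; ring)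
  rw [(QAux.rule1 (nv1 1) (nv2 1 1) k l m hm t ht).1, (QAux.rule1 nv0 (nv1 1) k l m hm t ht).1,
    (QAux.rule1 (nw1 2) (nw2 1 2) k l m hm t ht).1, QAux.rule2 nw0 (nw1 2) k l m hm t ht,
    (QAux.rule1 (nu1 0) (nu2 1 0) k l m hm t ht).1, (QAux.rule0 nu0 (nu1 0) k l m hm t ht).1,
    QAux.rule2 (nv1 2) (nv2 2 2) k l m hm t ht, QAux.rule2 nv0 (nv1 2) k l m hm t ht,
    (QAux.rule0 (nv1 0) (nv2 0 0) k l m hm t ht).1, (QAux.rule0 nv0 (nv1 0) k l m hm t ht).1] at hV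
  rw [QAux.rule2 (nw1 2) (nw2 2 2) k l m hm t ht, QAux.rule2 nw0 (nw1 2) k l m hm t ht,
    QAux.rule2 (nu1 0) (nu2 2 0) k l m hm t ht, (QAux.rule0 nu0 (nu1 0) k l m hm t ht).1,
    (QAux.rule0 nu0 (nu1 0) k l m hm t ht).2,
    QAux.rule2 (nv1 1) (nv2 2 1) k l m hm t ht, (QAux.rule1 nv0 (nv1 1) k l m hm t ht).1,
    (QAux.rule1 nv0 (nv1 1) k l m hm t ht).2,
    (QAux.rule0 (nw1 0) (nw2 0 0) k l m hm t ht).1, (QAux.rule0 nw0 (nw1 0) k l m hm t ht).1,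
    (QAux.rule1 (nw1 1) (nw2 1 1) k l m hm t ht).1,
    (QAux.rule1 nw0 (nw1 1) k l m hm t ht).1] at hW
  rw [(QAux.rule1 nw0 (nw1 1) k l m hm t ht).2] at hG2
  rw [(QAux.rule0 nu0 (nu1 0) k l m hm t ht).2, (QAux.rule1 nv0 (nv1 1) k l m hm t ht).2] at hG3
  have hne : (lam : ℂ) + 2 * (mu : ℂ) ≠ 0 := by exact_mod_cast hl.ne'
  have hG3' : ((lam : ℂ) + 2 * (mu : ℂ)) * FT2 g₃ k l t
      = ((lam : ℂ) + 2 * (mu : ℂ)) * FT2 (fun x y τ => pd 2 w x y 0 τ) k l t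
        + lam * (Complex.I * k * FT2 (fun x y τ => u x y 0 τ) k l t
          + Complex.I * l * FT2 (fun x y τ => v x y 0 τ) k l t) := by
    rw [hG3]
    push_cast
    field_simp
    ring
  rw [hD, hV, hW]
  unfold FQ
  push_cast at hG2 ⊢
  generalize FT2 (fun x y τ => pd 2 w x y 0 τ) k l t = wz at *
  generalize FT2 (fun x y τ => pd 2 v x y 0 τ) k l t = vz at *
  generalize FT2 (fun x y τ => u x y 0 τ) k l t = U at *
  generalize FT2 (fun x y τ => v x y 0 τ) k l t = V at *
  generalize FT2 (fun x y τ => w x y 0 τ) k l t = W at *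
  generalize FT3 u k l m t = u3 at *
  generalize FT3 v k l m t = v3 at *
  generalize FT3 w k l m t = w3 at *
  linear_combination (-(l : ℂ)) * hG3' + m * mu * hG2 + mu * (k ^ 2 + l ^ 2 + m ^ 2) * (m * v3 - l * w3) * Complex.I_sq
end
end
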